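/- arXiv:2007.05071 — 9 statements merged into one kernel-verified Lean document; each statement's English description precedes it below -/
import Mathlib

section
/- Fix τ ∈ (0,1) and ζ > 0, and let C = log₂(1 + ζ/τ). For any spectral efficiency ρ with 0 < ρ < C, setting α = 1/(2^ρ − 1), the asymptotic packet error probability p_e(N) := Q(√N·(α·ζ − τ)/√(α²·ζ + τ)) tends to 0 as N → ∞ (N ranging over the positive integers), and consequently the asymptotic age of information Δ(N) := 1/(τ·(1 − p_e(N))) tends to 1/τ as N → ∞. -/
open Filter Topology

/-- The standard Gaussian tail function `Q(x) = (1/√(2π)) ∫ₓ^∞ e^{−t²/2} dt`. -/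
noncomputable def gaussQ (x : ℝ) : ℝ :=
  (Real.sqrt (2 * Real.pi))⁻¹ * ∫ t in Set.Ioi x, Real.exp (-t ^ 2 / 2)

/-- Achievability (Theorem 2): for any spectral efficiency `ρ` below the age-limited
capacity `C = log₂(1 + ζ/τ)`, the asymptotic packet error probability
`p_e(N) = Q(√N (αζ − τ)/√(α²ζ + τ))` (with `α = 1/(2^ρ − 1)`) tends to `0`, and the
asymptotic age of information `Δ(N) = 1/(τ(1 − p_e(N)))` tends to `1/τ`, as `N → ∞`. -/
theorem age_limited_capacity_achievability
    (τ ζ ρ : ℝ) (hτ0 : 0 < τ) (hτ1 : τ < 1) (hζ : 0 < ζ)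
    (hρ0 : 0 < ρ) (hρC : ρ < Real.logb 2 (1 + ζ / τ))
    (α : ℝ) (hα : α = 1 / ((2 : ℝ) ^ ρ - 1))
    (pe : ℕ → ℝ)
    (hpe : ∀ N : ℕ, pe N =
      gaussQ (Real.sqrt N * (α * ζ - τ) / Real.sqrt (α ^ 2 * ζ + τ))) :
    Tendsto pe atTop (𝓝 0) ∧
      Tendsto (fun N : ℕ => 1 / (τ * (1 - pe N))) atTop (𝓝 (1 / τ)) := by
  have h2 : 1 < (2:ℝ) ^ ρ := Real.one_lt_rpow (by norm_num) hρ0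
  have h3 : (2:ℝ) ^ ρ < 1 + ζ / τ :=
    (Real.lt_logb_iff_rpow_lt (by norm_num) (by positivity)).1 hρC
  have hd : 0 < (2:ℝ) ^ ρ - 1 := by linarith
  have hα0 : 0 < α := by rw [hα]; positivity
  have h4 : 0 < α * ζ - τ := by
    have h5 : (2:ℝ) ^ ρ - 1 < ζ / τ := by linarith
    rw [lt_div_iff₀ hτ0] at h5
    have h6 : τ < ζ / ((2:ℝ) ^ ρ - 1) := by
      rw [lt_div_iff₀ hd]; linarith
    have h7 : α * ζ = ζ / ((2:ℝ) ^ ρ - 1) := by rw [hα]; ring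
    linarith
  have h8 : 0 < Real.sqrt (α ^ 2 * ζ + τ) := Real.sqrt_pos.2 (by positivity)
  have harg : Tendsto (fun N : ℕ => Real.sqrt N * (α * ζ - τ) / Real.sqrt (α ^ 2 * ζ + τ))
      atTop atTop :=
    ((Real.tendsto_sqrt_atTop.comp tendsto_natCast_atTop_atTop).atTop_mul_const h4).atTop_div_const
      h8
  have hp : Tendsto pe atTop (𝓝 0) := by
    have h9 := (MeasureTheory.tendsto_integral_Ioi_zero (μ := MeasureTheory.volume)
      (f := fun t : ℝ => Real.exp (-t ^ 2 / 2)) harg).const_mul (Real.sqrt (2 * Real.pi))⁻¹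
    rw [mul_zero] at h9
    exact h9.congr fun N => (hpe N).symm
  refine ⟨hp, ?_⟩
  have h10 : Tendsto (fun N : ℕ => τ * (1 - pe N)) atTop (𝓝 τ) := by
    simpa using (hp.const_sub 1).const_mul τ
  exact tendsto_const_nhds.div h10 hτ0.ne'
end

section
/- Fix τ ∈ (0,1) and ζ > 0, and let C = log₂(1 + ζ/τ). For any spectral efficiency ρ with ρ > C, setting α = 1/(2^ρ − 1), the asymptotic packet error probability p_e(N) := Q(√N·(α·ζ − τ)/√(α²·ζ + τ)) tends to 1 as N → ∞ (N ranging over the positive integers), and consequently the asymptotic age of information Δ(N) := 1/(τ·(1 − p_e(N))) tends to +∞ as N → ∞. -/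
open Filter Topology

lemma gq_integrable : MeasureTheory.Integrable (fun t : ℝ => Real.exp (-t ^ 2 / 2)) := by
  have h := integrable_exp_neg_mul_sq (b := 1/2) (by norm_num)
  refine h.congr (Filter.Eventually.of_forall fun t => ?_)
  simp only []
  congr 1
  ring

lemma gq_total : ∫ t : ℝ, Real.exp (-t ^ 2 / 2) = Real.sqrt (2 * Real.pi) := by
  have h := integral_gaussian (1/2)
  have e : (fun t : ℝ => Real.exp (-t ^ 2 / 2)) = fun t => Real.exp (-(1/2) * t ^ 2) := by
    funext t
    congr 1
    ring
  rw [e, h]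
  congr 1
  ring

lemma gq_lt_one (x : ℝ) : gaussQ x < 1 := by
  have hs : 0 < Real.sqrt (2 * Real.pi) := by positivity
  have hadd := MeasureTheory.integral_add_compl (measurableSet_Ioi (a := x)) gq_integrable
  rw [gq_total, Set.compl_Ioi] at hadd
  have hpos : 0 < ∫ t in Set.Iic x, Real.exp (-t ^ 2 / 2) := by
    rw [MeasureTheory.setIntegral_pos_iff_support_of_nonneg_ae
      (Filter.Eventually.of_forall fun t => (Real.exp_pos _).le) gq_integrable.integrableOn]
    have : Function.support (fun t : ℝ => Real.exp (-t ^ 2 / 2)) = Set.univ := by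
      ext t
      simp [Real.exp_ne_zero]
    rw [this, Set.univ_inter]
    simp
  unfold gaussQ
  rw [inv_mul_lt_iff₀ hs]
  linarith

lemma gq_tendsto : Tendsto gaussQ atBot (𝓝 1) := by
  have hs : Real.sqrt (2 * Real.pi) ≠ 0 := by positivity
  have h := (MeasureTheory.aecover_Ioi (μ := MeasureTheory.volume) (tendsto_id (α := ℝ)
    (x := atBot))).integral_tendsto_of_countably_generated gq_integrable
  rw [gq_total] at h
  have h2 := h.const_mul (Real.sqrt (2 * Real.pi))⁻¹
  rw [inv_mul_cancel₀ hs] at h2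
  exact h2

/-- Strong converse (Theorem 3): for any spectral efficiency `ρ` above the age-limited
capacity `C = log₂(1 + ζ/τ)`, the asymptotic packet error probability
`p_e(N) = Q(√N (αζ − τ)/√(α²ζ + τ))` (with `α = 1/(2^ρ − 1)`) tends to `1`, and the
asymptotic age of information `Δ(N) = 1/(τ(1 − p_e(N)))` tends to `+∞`, as `N → ∞`. -/
theorem age_limited_capacity_strong_converse
    (τ ζ ρ : ℝ) (hτ0 : 0 < τ) (hτ1 : τ < 1) (hζ : 0 < ζ)
    (hρC : ρ > Real.logb 2 (1 + ζ / τ))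
    (α : ℝ) (hα : α = 1 / ((2 : ℝ) ^ ρ - 1))
    (pe : ℕ → ℝ)
    (hpe : ∀ N : ℕ, pe N =
      gaussQ (Real.sqrt N * (α * ζ - τ) / Real.sqrt (α ^ 2 * ζ + τ))) :
    Tendsto pe atTop (𝓝 1) ∧
      Tendsto (fun N : ℕ => 1 / (τ * (1 - pe N))) atTop atTop := by
  have hr : 0 < ζ / τ := by positivity
  have h2 : 1 + ζ / τ < (2 : ℝ) ^ ρ :=
    (Real.logb_lt_iff_lt_rpow (by norm_num) (by positivity)).1 hρC
  have hαζ : α * ζ - τ < 0 := by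
    rw [hα, sub_neg, one_div_mul_eq_div, div_lt_iff₀ (by linarith), mul_comm,
      ← div_lt_iff₀ hτ0]
    linarith
  have hd : 0 < Real.sqrt (α ^ 2 * ζ + τ) := by positivity
  have harg : Tendsto (fun N : ℕ => Real.sqrt N * (α * ζ - τ) / Real.sqrt (α ^ 2 * ζ + τ))
      atTop atBot := by
    refine Tendsto.atBot_div_const hd ?_
    refine Tendsto.atTop_mul_const_of_neg hαζ ?_
    exact Real.tendsto_sqrt_atTop.comp tendsto_natCast_atTop_atTop
  have hlim : Tendsto pe atTop (𝓝 1) := by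
    rw [funext hpe]
    exact gq_tendsto.comp harg
  refine ⟨hlim, ?_⟩
  have h0 : Tendsto (fun N : ℕ => τ * (1 - pe N)) atTop (𝓝[>] 0) := by
    refine tendsto_nhdsWithin_iff.2 ⟨?_, Filter.Eventually.of_forall fun N => ?_⟩
    · have := (hlim.const_sub 1).const_mul τ
      simpa using this
    · have : pe N < 1 := by
        rw [hpe]
        exact gq_lt_one _
      exact mul_pos hτ0 (by linarith)
  simp only [one_div]
  exact h0.inv_tendsto_nhdsGT_zero
end

section
/- Let τ ∈ (0,1), ζ > 0, C = log₂(1 + ζ/τ), and let δ satisfy 0 < δ < C. With α = 1/(2^{C−δ} − 1), the quantity φ := (α·ζ − τ)/√(α²·ζ + τ) satisfies the identity φ = (ζ + τ)(1 − 2^{−δ})/√(ζ + τ·(2^{C−δ} − 1)²), and in particular φ > 0. -/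
/-- Key identity in the proof of the achievability theorem (Theorem 2, eq. (31)):
below capacity, the normalized Q-function argument `φ = (αζ − τ)/√(α²ζ + τ)` with
`α = 1/(2^{C−δ} − 1)` equals `(ζ + τ)(1 − 2^{−δ})/√(ζ + τ(2^{C−δ} − 1)²)`,
which is positive. -/
theorem phi_below_capacity_identity
    (τ ζ δ : ℝ) (hτ0 : 0 < τ) (hτ1 : τ < 1) (hζ : 0 < ζ)
    (C : ℝ) (hC : C = Real.logb 2 (1 + ζ / τ))
    (hδ0 : 0 < δ) (hδC : δ < C)
    (α : ℝ) (hα : α = 1 / ((2 : ℝ) ^ (C - δ) - 1))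
    (φ : ℝ) (hφ : φ = (α * ζ - τ) / Real.sqrt (α ^ 2 * ζ + τ)) :
    φ = (ζ + τ) * (1 - (2 : ℝ) ^ (-δ)) /
        Real.sqrt (ζ + τ * ((2 : ℝ) ^ (C - δ) - 1) ^ 2) ∧ 0 < φ := by
  have hx : 0 < (2 : ℝ) ^ (C - δ) - 1 := by
    have := Real.one_lt_rpow (x := 2) (by norm_num) (sub_pos.2 hδC)
    linarith
  have hd : (2 : ℝ) ^ (-δ) < 1 := Real.rpow_lt_one_of_one_lt_of_neg (by norm_num) (by linarith)
  have h2C : (2 : ℝ) ^ C = 1 + ζ / τ := by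
    rw [hC]
    exact Real.rpow_logb (by norm_num) (by norm_num) (by positivity)
  have hmul : (2 : ℝ) ^ (C - δ) = (1 + ζ / τ) * (2 : ℝ) ^ (-δ) := by
    rw [sub_eq_add_neg, Real.rpow_add (by norm_num), h2C]
  have hnum : ζ - τ * ((2 : ℝ) ^ (C - δ) - 1) = (ζ + τ) * (1 - (2 : ℝ) ^ (-δ)) := by
    rw [hmul]
    field_simp
    ring
  rw [← hnum]
  have hpos : 0 < ζ - τ * ((2 : ℝ) ^ (C - δ) - 1) := by
    rw [hnum]
    exact mul_pos (by linarith) (by linarith)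
  clear hnum hmul
  generalize (2 : ℝ) ^ (C - δ) - 1 = x at *
  have hs : 0 < Real.sqrt (ζ + τ * x ^ 2) := Real.sqrt_pos.2 (by positivity)
  have hsq : Real.sqrt (α ^ 2 * ζ + τ) = Real.sqrt (ζ + τ * x ^ 2) / x := by
    have : α ^ 2 * ζ + τ = (ζ + τ * x ^ 2) / x ^ 2 := by
      rw [hα]
      field_simp
    rw [this, Real.sqrt_div (by positivity), Real.sqrt_sq hx.le]
  have key : φ = (ζ - τ * x) / Real.sqrt (ζ + τ * x ^ 2) := by
    rw [hφ, hsq, hα]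
    field_simp
  exact ⟨key, key ▸ div_pos hpos hs⟩
end

section
/- Let τ ∈ (0,1), ζ > 0, C = log₂(1 + ζ/τ), and let δ > 0. With α = 1/(2^{C+δ} − 1), the quantity φ := (α·ζ − τ)/√(α²·ζ + τ) satisfies the identity φ = −(ζ + τ)(2^{δ} − 1)/√(ζ + τ·(2^{C+δ} − 1)²), and in particular φ < 0. -/
/-- Key identity in the proof of the strong converse (Theorem 3):
above capacity, the normalized Q-function argument `φ = (αζ − τ)/√(α²ζ + τ)` with
`α = 1/(2^{C+δ} − 1)` equals `−(ζ + τ)(2^{δ} − 1)/√(ζ + τ(2^{C+δ} − 1)²)`,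
which is negative. -/
theorem phi_above_capacity_identity
    (τ ζ δ : ℝ) (hτ0 : 0 < τ) (hτ1 : τ < 1) (hζ : 0 < ζ)
    (C : ℝ) (hC : C = Real.logb 2 (1 + ζ / τ))
    (hδ0 : 0 < δ)
    (α : ℝ) (hα : α = 1 / ((2 : ℝ) ^ (C + δ) - 1))
    (φ : ℝ) (hφ : φ = (α * ζ - τ) / Real.sqrt (α ^ 2 * ζ + τ)) :
    φ = -((ζ + τ) * ((2 : ℝ) ^ δ - 1) /
        Real.sqrt (ζ + τ * ((2 : ℝ) ^ (C + δ) - 1) ^ 2)) ∧ φ < 0 := by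
  have hd : (1 : ℝ) < (2 : ℝ) ^ δ := Real.one_lt_rpow (by norm_num) hδ0
  have h1 : (2 : ℝ) ^ C = 1 + ζ / τ := by
    rw [hC]
    exact Real.rpow_logb (by norm_num) (by norm_num) (by positivity)
  have h2 : (2 : ℝ) ^ (C + δ) = (1 + ζ / τ) * (2 : ℝ) ^ δ := by
    rw [Real.rpow_add (by norm_num), h1]
  have hz : 0 < ζ / τ := by positivity
  have hb : 0 < (2 : ℝ) ^ (C + δ) - 1 := by
    rw [h2]; nlinarith
  have hk : ζ - τ * ((2 : ℝ) ^ (C + δ) - 1) = -((ζ + τ) * ((2 : ℝ) ^ δ - 1)) := by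
    rw [h2]; field_simp; ring
  generalize (2 : ℝ) ^ (C + δ) - 1 = b at *
  have hS : 0 < Real.sqrt (ζ + τ * b ^ 2) := Real.sqrt_pos.mpr (by positivity)
  have hs : Real.sqrt (α ^ 2 * ζ + τ) = Real.sqrt (ζ + τ * b ^ 2) / b := by
    have : α ^ 2 * ζ + τ = (ζ + τ * b ^ 2) / b ^ 2 := by
      rw [hα]; field_simp
    rw [this, Real.sqrt_div (by positivity), Real.sqrt_sq hb.le]
  have hn : α * ζ - τ = (ζ - τ * b) / b := by
    rw [hα]; field_simp
  have key : φ = -((ζ + τ) * ((2 : ℝ) ^ δ - 1) / Real.sqrt (ζ + τ * b ^ 2)) := by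
    rw [hφ, hs, hn, hk, div_div_div_cancel_right₀ hb.ne', neg_div]
  refine ⟨key, ?_⟩
  rw [key]
  have : 0 < (2 : ℝ) ^ δ - 1 := by linarith
  exact neg_neg_of_pos (by positivity)
end

section
/- Let N be a positive integer, τ ∈ (0,1), ζ > 0 and q > 0 with ζ > q²/N. Define ρ*_N := log₂( 1 + (ζ − q²/N) / (τ + √(τ² + τ·(1 − q²/(N·ζ))·(q²/N − τ))) ). Then: (i) the radicand τ² + τ(1 − q²/(Nζ))(q²/N − τ) is nonnegative and ρ*_N > 0; and (ii) for every ρ > 0, setting α = 1/(2^ρ − 1), the inequality √N·(α·ζ − τ)/√(α²·ζ + τ) > q holds if and only if ρ < ρ*_N. -/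
/-- Core of Theorem 1: for finite `N`, with `ζ > q²/N`, the radicand in the
definition of `ρ*_N` is nonnegative, `ρ*_N > 0`, and for every spectral efficiency
`ρ > 0` (with `α = 1/(2^ρ − 1)`) the error-target condition
`√N (αζ − τ)/√(α²ζ + τ) > q` holds iff `ρ < ρ*_N`. -/
theorem rho_star_characterization
    (N : ℕ) (hN : 0 < N) (τ ζ q : ℝ)
    (hτ0 : 0 < τ) (hτ1 : τ < 1) (hζ : 0 < ζ) (hq : 0 < q)
    (hζq : ζ > q ^ 2 / (N : ℝ))
    (ρstar : ℝ)
    (hρstar : ρstar = Real.logb 2 (1 + (ζ - q ^ 2 / (N : ℝ)) /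
      (τ + Real.sqrt (τ ^ 2 +
        τ * (1 - q ^ 2 / ((N : ℝ) * ζ)) * (q ^ 2 / (N : ℝ) - τ))))) :
    (0 ≤ τ ^ 2 + τ * (1 - q ^ 2 / ((N : ℝ) * ζ)) * (q ^ 2 / (N : ℝ) - τ) ∧
      0 < ρstar) ∧
    ∀ ρ : ℝ, 0 < ρ →
      (Real.sqrt N * ((1 / ((2 : ℝ) ^ ρ - 1)) * ζ - τ) /
          Real.sqrt ((1 / ((2 : ℝ) ^ ρ - 1)) ^ 2 * ζ + τ) > q ↔ ρ < ρstar) := by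
  have hN' : (0:ℝ) < N := by exact_mod_cast hN
  have hk : q ^ 2 / ((N : ℝ) * ζ) = q ^ 2 / (N : ℝ) / ζ := by
    rw [div_div]
  rw [hk] at hρstar ⊢
  have hqc : q ^ 2 = (N : ℝ) * (q ^ 2 / (N : ℝ)) := by field_simp
  have hc : 0 < q ^ 2 / (N : ℝ) := by positivity
  generalize q ^ 2 / (N : ℝ) = c at *
  have hd : 0 < ζ - c := by linarith
  have hR : 0 < τ ^ 2 + τ * (1 - c / ζ) * (c - τ) := by
    have h1 : τ ^ 2 + τ * (1 - c / ζ) * (c - τ) = τ * (c / ζ * τ + (ζ - c) / ζ * c) := by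
      field_simp
      ring
    rw [h1]
    positivity
  have hkey : ∀ a : ℝ, (a * (ζ - c) - τ) ^ 2 - (τ ^ 2 + τ * (1 - c / ζ) * (c - τ))
      = (ζ - c) / ζ * ((a * ζ - τ) ^ 2 - c * (a ^ 2 * ζ + τ)) := by
    intro a
    field_simp
    ring
  generalize τ ^ 2 + τ * (1 - c / ζ) * (c - τ) = R at *
  have hs : 0 < Real.sqrt R := Real.sqrt_pos.mpr hR
  have hx : 0 < (ζ - c) / (τ + Real.sqrt R) := by positivity
  refine ⟨⟨hR.le, ?_⟩, ?_⟩
  · rw [hρstar]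
    exact Real.logb_pos (by norm_num) (by linarith)
  intro ρ hρ
  have hb : 0 < (2:ℝ) ^ ρ - 1 := by
    have := Real.one_lt_rpow (x := 2) (by norm_num) hρ
    linarith
  have e1 : ρ < ρstar ↔ Real.sqrt R < (1 / ((2:ℝ) ^ ρ - 1)) * (ζ - c) - τ := by
    rw [hρstar, Real.lt_logb_iff_rpow_lt (by norm_num) (by linarith), ← sub_lt_iff_lt_add',
      lt_div_iff₀ (by positivity), one_div_mul_eq_div, lt_sub_iff_add_lt (b := τ), lt_div_iff₀ hb,
      mul_comm, add_comm τ]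
  rw [e1]
  have ha : 0 < 1 / ((2:ℝ) ^ ρ - 1) := by positivity
  generalize 1 / ((2:ℝ) ^ ρ - 1) = a at *
  have hw : 0 < a ^ 2 * ζ + τ := by positivity
  have hfac : 0 < (ζ - c) / ζ := by positivity
  have hk := hkey a
  have hsN : 0 < Real.sqrt N := Real.sqrt_pos.mpr hN'
  have hNsq : Real.sqrt N ^ 2 = N := Real.sq_sqrt hN'.le
  have hwsq : Real.sqrt (a ^ 2 * ζ + τ) ^ 2 = a ^ 2 * ζ + τ := Real.sq_sqrt hw.le
  have hws : 0 < Real.sqrt (a ^ 2 * ζ + τ) := Real.sqrt_pos.mpr hw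
  rw [gt_iff_lt, lt_div_iff₀ hws]
  constructor
  · intro h
    have hv : 0 < a * ζ - τ := by
      have : 0 < Real.sqrt N * (a * ζ - τ) := lt_trans (by positivity) h
      exact (pos_iff_pos_of_mul_pos this).mp hsN
    have h2 := pow_lt_pow_left₀ h (by positivity) (two_ne_zero)
    rw [mul_pow, mul_pow, hwsq, hNsq, hqc, mul_assoc] at h2
    have h3 := lt_of_mul_lt_mul_left h2 hN'.le
    have hu : 0 < a * (ζ - c) - τ := by
      by_contra hcon
      have h4 : a * ζ - τ ≤ c * a := by linarith
      have h5 : (a * ζ - τ) * (a * ζ - τ) ≤ (c * a) * (a * ζ) :=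
        mul_le_mul h4 (by linarith) hv.le (by positivity)
      have : 0 < c * τ := by positivity
      nlinarith
    rw [Real.sqrt_lt' hu]
    have := mul_pos hfac (sub_pos.mpr h3)
    linarith
  · intro h
    have hu : 0 < a * (ζ - c) - τ := hs.trans h
    rw [Real.sqrt_lt' hu] at h
    have hv : 0 < a * ζ - τ := by
      have : 0 < a * c := by positivity
      linarith
    have h3 : 0 < (a * ζ - τ) ^ 2 - c * (a ^ 2 * ζ + τ) := by
      refine (pos_iff_pos_of_mul_pos ?_).mp hfac
      linarith
    refine lt_of_pow_lt_pow_left₀ 2 (by positivity) ?_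
    rw [mul_pow, mul_pow, hwsq, hNsq, hqc, mul_assoc]
    exact mul_lt_mul_of_pos_left (by linarith) hN'
end

section
/- Let N > 0, τ ∈ (0,1), ζ > 0 and q > 0 with N·ζ > q². Define D := 1 − (1 − q²/(N·ζ))·(1 − q²/(N·τ)) and α⁺ := τ·(1 + √D)/(ζ − q²/N). Then D > 0, and for every α ≥ 0: √N·(α·ζ − τ) > q·√(α²·ζ + τ) if and only if α > α⁺. -/
/-- Case 1 of Appendix C: when `Nζ > q²`, the discriminant quantity
`D = 1 − (1 − q²/(Nζ))(1 − q²/(Nτ))` is positive, and for nonnegative `α` the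
inequality `√N (αζ − τ) > q √(α²ζ + τ)` holds iff `α` exceeds the larger root
`α⁺ = τ(1 + √D)/(ζ − q²/N)`. -/
theorem error_target_iff_alpha_gt_alpha_plus
    (N τ ζ q : ℝ) (hN : 0 < N) (hτ0 : 0 < τ) (hτ1 : τ < 1) (hζ : 0 < ζ)
    (hq : 0 < q) (h : N * ζ > q ^ 2)
    (D : ℝ) (hD : D = 1 - (1 - q ^ 2 / (N * ζ)) * (1 - q ^ 2 / (N * τ)))
    (αplus : ℝ) (hαplus : αplus = τ * (1 + Real.sqrt D) / (ζ - q ^ 2 / N)) :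
    0 < D ∧
      ∀ α : ℝ, 0 ≤ α →
        (Real.sqrt N * (α * ζ - τ) > q * Real.sqrt (α ^ 2 * ζ + τ) ↔ α > αplus) := by
  obtain ⟨p, hp⟩ : ∃ p, p = q ^ 2 / N := ⟨_, rfl⟩
  have hp0 : 0 < p := by rw [hp]; positivity
  have hpq : q ^ 2 = p * N := by rw [hp]; field_simp
  have hpζ : p < ζ := by rw [hp, div_lt_iff₀ hN]; linarith
  have hDζ : D * ζ * τ = p * τ + (ζ - p) * p := by
    rw [hD, hpq]; field_simp; ring
  have hr : 0 < ζ - p := by linarith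
  have hD0 : 0 < D := by
    have h1 : 0 < D * (ζ * τ) := by
      rw [← mul_assoc, hDζ]; positivity
    exact pos_of_mul_pos_left h1 (by positivity)
  refine ⟨hD0, fun α hα => ?_⟩
  rw [← hp] at hαplus
  obtain ⟨s, hs⟩ : ∃ s, s = Real.sqrt D := ⟨_, rfl⟩
  have hs0 : 0 < s := by rw [hs]; exact Real.sqrt_pos.2 hD0
  have hs2 : s ^ 2 = D := by rw [hs]; exact Real.sq_sqrt hD0.le
  rw [← hs] at hαplus
  have hR : α > αplus ↔ τ * s < (ζ - p) * α - τ := by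
    rw [hαplus, gt_iff_lt, div_lt_iff₀ hr]
    constructor <;> intro h <;> linarith
  have key : (ζ - p) * ((α * ζ - τ) ^ 2 - p * (α ^ 2 * ζ + τ))
      = ζ * (((ζ - p) * α - τ) ^ 2 - (τ * s) ^ 2) := by
    rw [mul_pow, hs2]
    linear_combination τ * hDζ
  have hps : p < ζ * s := by
    have h1 : p ^ 2 < (ζ * s) ^ 2 := by
      rw [mul_pow, hs2]
      have h2 : p ^ 2 * τ < (ζ ^ 2 * D) * τ := by
        have e : (ζ ^ 2 * D) * τ - p ^ 2 * τ = p * τ * (ζ - p) + ζ * ((ζ - p) * p) := by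
          linear_combination ζ * hDζ
        have : 0 < p * τ * (ζ - p) + ζ * ((ζ - p) * p) := by positivity
        linarith
      exact lt_of_mul_lt_mul_right h2 hτ0.le
    exact lt_of_pow_lt_pow_left₀ 2 (by positivity) h1
  have hA : 0 < α ^ 2 * ζ + τ := by positivity
  have hsA := Real.sqrt_pos.2 hA
  have hsN := Real.sqrt_pos.2 hN
  have e1 : (q * Real.sqrt (α ^ 2 * ζ + τ)) ^ 2 = N * (p * (α ^ 2 * ζ + τ)) := by
    rw [mul_pow, Real.sq_sqrt hA.le, hpq]; ring
  have e2 : (Real.sqrt N * (α * ζ - τ)) ^ 2 = N * (α * ζ - τ) ^ 2 := by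
    rw [mul_pow, Real.sq_sqrt hN.le]
  rw [hR, gt_iff_lt]
  constructor
  · intro hlt
    have hpos : 0 < α * ζ - τ :=
      pos_of_mul_pos_right (lt_trans (by positivity) hlt) hsN.le
    have hsq := pow_lt_pow_left₀ hlt (by positivity) two_ne_zero
    rw [e1, e2] at hsq
    have h3 := lt_of_mul_lt_mul_left hsq hN.le
    have h4 : 0 < ζ * (((ζ - p) * α - τ) ^ 2 - (τ * s) ^ 2) := by
      rw [← key]; exact mul_pos hr (by linarith)
    have h5 := pos_of_mul_pos_right h4 hζ.le
    have h6 : 0 < (ζ - p) * α - τ + τ * s := by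
      have : 0 < ζ * ((ζ - p) * α - τ + τ * s) := by
        have a := mul_pos hr hpos
        have b := mul_pos hτ0 (sub_pos.2 hps)
        nlinarith
      exact pos_of_mul_pos_right this hζ.le
    have h7 : 0 < ((ζ - p) * α - τ + τ * s) * ((ζ - p) * α - τ - τ * s) := by
      linarith
    have := pos_of_mul_pos_right h7 h6.le
    linarith
  · intro hu
    have hts : 0 < τ * s := by positivity
    have hpa : 0 ≤ p * α := by positivity
    have hpos : 0 < α * ζ - τ := by linarith
    have hsq := pow_lt_pow_left₀ hu hts.le two_ne_zero
    have h4 : 0 < (ζ - p) * ((α * ζ - τ) ^ 2 - p * (α ^ 2 * ζ + τ)) := by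
      rw [key]; exact mul_pos hζ (by linarith)
    have h5 := pos_of_mul_pos_right h4 hr.le
    refine lt_of_pow_lt_pow_left₀ 2 (by positivity) ?_
    rw [e1, e2]
    exact mul_lt_mul_of_pos_left (by linarith) hN
end

section
/- Fix α > 0, τ ∈ (0,1), ζ > 0 and β ≥ 0. There exists a constant C > 0 such that for every integer N ≥ 2, setting M = ⌈ζ·N⌉ and w(k) = (β − α·M + k)/√(α²·M + k), the following holds: | Σ_{k=0}^{N−1} C(N−1,k)·τ^k·(1−τ)^{N−1−k}·Q(w(k)) − (1/√(2π)) ∫_ℝ Q(w̃(s))·e^{−s²/2} ds | ≤ C/√N, where w̃(s) = (β − α·M + s·√((N−1)τ(1−τ)) + (N−1)τ) / √(α²·M + s·√((N−1)τ(1−τ)) + (N−1)τ), with the convention that for those s for which the radicand in the denominator is nonpositive the integrand value Q(w̃(s)) is taken to be Q(0) = 1/2. -/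
open MeasureTheory ProbabilityTheory

lemma aux_moment (μ : ℝ) (v : NNReal) (p : ℕ) :
    Integrable (fun z : ℝ => |z| ^ p) (gaussianReal μ v) := by
  have h := (memLp_id_gaussianReal' (μ := μ) (v := v) (p : ENNReal) (by simp)).integrable_norm_pow'
  simpa using h

lemma aux_integrable {h a b : ℝ → ℝ} {L : ℝ} (hc : Continuous h)
    (hT : ∀ x d, |h (x + d) - h x - a x * d - b x * d ^ 2| ≤ L * |d| ^ 3) (μ : ℝ) (v : NNReal) :
    Integrable h (gaussianReal μ v) := by
  have hi : Integrable (fun z : ℝ => |h 0| + |a 0| * |z| ^ 1 + |b 0| * |z| ^ 2 + L * |z| ^ 3)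
      (gaussianReal μ v) :=
    (((integrable_const _).add ((aux_moment μ v 1).const_mul _)).add
      ((aux_moment μ v 2).const_mul _)).add ((aux_moment μ v 3).const_mul _)
  refine hi.mono' hc.aestronglyMeasurable (Filter.Eventually.of_forall fun z => ?_)
  have h1 := hT 0 z
  rw [zero_add] at h1
  have e : h z = (h z - h 0 - a 0 * z - b 0 * z ^ 2) + h 0 + a 0 * z + b 0 * z ^ 2 := by ring
  rw [Real.norm_eq_abs, e]
  have t1 := abs_add_le ((h z - h 0 - a 0 * z - b 0 * z ^ 2) + h 0 + a 0 * z) (b 0 * z ^ 2)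
  have t2 := abs_add_le ((h z - h 0 - a 0 * z - b 0 * z ^ 2) + h 0) (a 0 * z)
  have t3 := abs_add_le (h z - h 0 - a 0 * z - b 0 * z ^ 2) (h 0)
  rw [abs_mul, abs_pow] at t1
  rw [abs_mul] at t2
  rw [pow_one]
  linarith

lemma aux_integrable_shift {h a b : ℝ → ℝ} {L : ℝ} (hc : Continuous h)
    (hT : ∀ x d, |h (x + d) - h x - a x * d - b x * d ^ 2| ≤ L * |d| ^ 3) (μ : ℝ) (v : NNReal)
    (x : ℝ) :
    Integrable (fun z => h (x + z)) (gaussianReal μ v) := by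
  have h1 := aux_integrable hc hT (μ + x) v
  rw [← gaussianReal_map_const_add] at h1
  exact h1.comp_measurable (by fun_prop)

/-- one-step comparison -/
lemma aux_step {h a b : ℝ → ℝ} {L τ : ℝ} (hc : Continuous h) (hL : 0 ≤ L)
    (hT : ∀ x d, |h (x + d) - h x - a x * d - b x * d ^ 2| ≤ L * |d| ^ 3)
    (hτ0 : 0 < τ) (hτ1 : τ < 1) (v : NNReal) (hv : (v : ℝ) = τ * (1 - τ)) (x : ℝ) :
    |(τ * h (x + 1) + (1 - τ) * h x) - ∫ z, h (x + z) ∂(gaussianReal τ v)| ≤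
      L * (1 + ∫ z, |z| ^ 3 ∂(gaussianReal 0 v)) := by
  set m := x + τ with hm
  have e1 : ∫ z, h (x + z) ∂(gaussianReal τ v) = ∫ z, h (m + z) ∂(gaussianReal 0 v) := by
    have : gaussianReal τ v = (gaussianReal 0 v).map (fun z => τ + z) := by
      rw [gaussianReal_map_const_add, zero_add]
    rw [this, integral_map (by fun_prop) (by fun_prop)]
    simp only [hm, add_assoc]
  have hmean : ∫ z, z ∂(gaussianReal 0 v) = 0 := integral_id_gaussianReal
  have hvar : ∫ z, z ^ 2 ∂(gaussianReal 0 v) = v := by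
    have := variance_fun_id_gaussianReal (μ := 0) (v := v)
    rw [variance_eq_integral (by fun_prop)] at this
    simpa [hmean] using this
  have i1 : Integrable (fun z : ℝ => z) (gaussianReal 0 v) := by
    have := aux_moment 0 v 1
    refine this.mono (by fun_prop) (by simp)
  have i2 : Integrable (fun z : ℝ => z ^ 2) (gaussianReal 0 v) := by
    have := aux_moment 0 v 2
    simpa using this
  have ih := aux_integrable_shift hc hT 0 v m
  have e2 : ∫ z, h (m + z) ∂(gaussianReal 0 v) = h m + b m * v +
      ∫ z, (h (m + z) - h m - a m * z - b m * z ^ 2) ∂(gaussianReal 0 v) := by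
    rw [integral_sub, integral_sub, integral_sub, integral_const_mul, integral_const_mul,
      hmean, hvar]
    · simp
    all_goals first | exact ih | exact integrable_const _ | skip
    · exact ih.sub (integrable_const _)
    · exact i1.const_mul _
    · exact (ih.sub (integrable_const _)).sub (i1.const_mul _)
    · exact i2.const_mul _
  have b2 : |∫ z, (h (m + z) - h m - a m * z - b m * z ^ 2) ∂(gaussianReal 0 v)| ≤
      L * ∫ z, |z| ^ 3 ∂(gaussianReal 0 v) := by
    rw [← integral_const_mul, ← Real.norm_eq_abs]
    exact norm_integral_le_of_norm_le ((aux_moment 0 v 3).const_mul _)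
      (Filter.Eventually.of_forall fun z => hT m z)
  have c1 := hT m (1 - τ)
  have c2 := hT m (-τ)
  have x1 : m + (1 - τ) = x + 1 := by simp [hm]
  have x2 : m + -τ = x := by simp [hm]
  rw [x1] at c1
  rw [x2] at c2
  have p1 : |1 - τ| ^ 3 ≤ 1 := pow_le_one₀ (abs_nonneg _) (by rw [abs_le]; constructor <;> linarith)
  have p2 : |-τ| ^ 3 ≤ 1 := pow_le_one₀ (abs_nonneg _) (by rw [abs_le]; constructor <;> linarith)
  have c1' := c1.trans (mul_le_of_le_one_right hL p1)
  have c2' := c2.trans (mul_le_of_le_one_right hL p2)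
  rw [e1, e2, hv]
  set I := ∫ z, (h (m + z) - h m - a m * z - b m * z ^ 2) ∂(gaussianReal 0 v)
  set J := ∫ z, |z| ^ 3 ∂(gaussianReal 0 v)
  rw [abs_le] at *
  have q1 : (τ * h (x + 1) + (1 - τ) * h x) - (h m + b m * (τ * (1 - τ)) + I) =
      τ * (h (x + 1) - h m - a m * (1 - τ) - b m * (1 - τ) ^ 2) +
      (1 - τ) * (h x - h m - a m * -τ - b m * (-τ) ^ 2) - I := by ring
  rw [q1]
  constructor
  · nlinarith
  · nlinarith

noncomputable def binAvg (τ : ℝ) (h : ℝ → ℝ) (n : ℕ) (x : ℝ) : ℝ :=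
  ∑ k ∈ Finset.range (n + 1), (n.choose k : ℝ) * τ ^ k * (1 - τ) ^ (n - k) * h (x + k)

lemma binAvg_succ (τ : ℝ) (h : ℝ → ℝ) (n : ℕ) (x : ℝ) :
    binAvg τ h (n + 1) x = τ * binAvg τ h n (x + 1) + (1 - τ) * binAvg τ h n x := by
  unfold binAvg
  rw [Finset.sum_range_succ']
  have e : ∀ k ∈ Finset.range (n + 1), ((n + 1).choose (k + 1) : ℝ) * τ ^ (k + 1) *
      (1 - τ) ^ (n + 1 - (k + 1)) * h (x + ((k + 1 : ℕ) : ℝ)) =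
      τ * ((n.choose k : ℝ) * τ ^ k * (1 - τ) ^ (n - k) * h (x + 1 + k)) +
      (n.choose (k + 1) : ℝ) * τ ^ (k + 1) *
      (1 - τ) ^ (n - k) * h (x + ((k + 1 : ℕ) : ℝ)) := by
    intro k _
    rw [Nat.choose_succ_succ, Nat.add_sub_add_right]
    push_cast
    rw [show x + 1 + (k : ℝ) = x + (k + 1) by ring]
    ring
  rw [Finset.sum_congr rfl e, Finset.sum_add_distrib, ← Finset.mul_sum, add_assoc]
  congr 1
  rw [Finset.sum_range_succ, Nat.choose_succ_self, Finset.mul_sum, Finset.sum_range_succ' _ n]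
  simp only [Nat.cast_zero, zero_mul, add_zero]
  congr 1
  · refine Finset.sum_congr rfl fun k hk => ?_
    have : n - k = (n - (k + 1)) + 1 := by
      have := Finset.mem_range.1 hk
      omega
    rw [this, pow_succ (1 - τ)]
    ring
  · simp
    ring

lemma aux_lindeberg {h a b : ℝ → ℝ} {L τ : ℝ} (hc : Continuous h) (hL : 0 ≤ L)
    (hT : ∀ x d, |h (x + d) - h x - a x * d - b x * d ^ 2| ≤ L * |d| ^ 3)
    (hτ0 : 0 < τ) (hτ1 : τ < 1) (v : NNReal) (hv : (v : ℝ) = τ * (1 - τ)) (n : ℕ) :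
    ∀ x, |binAvg τ h n x - ∫ z, h (x + z) ∂(gaussianReal (n * τ) (n * v))| ≤
      n * (L * (1 + ∫ z, |z| ^ 3 ∂(gaussianReal 0 v))) := by
  induction n with
  | zero => intro x; simp [binAvg]
  | succ n ih =>
    intro x
    set D := L * (1 + ∫ z, |z| ^ 3 ∂(gaussianReal 0 v)) with hD
    have hconv : gaussianReal ((n + 1 : ℕ) * τ) ((n + 1 : ℕ) * v) =
        gaussianReal (n * τ) (n * v) ∗ gaussianReal τ v := by
      rw [gaussianReal_conv_gaussianReal]
      congr 1 <;> (push_cast; ring)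
    have hint := aux_integrable_shift hc hT ((n + 1 : ℕ) * τ) ((n + 1 : ℕ) * v) x
    rw [hconv] at hint ⊢
    rw [integral_conv hint]
    have hin2 : Integrable (fun z => ∫ y, h (x + (z + y)) ∂(gaussianReal τ v))
        (gaussianReal (n * τ) (n * v)) := by
      have : Integrable (fun p : ℝ × ℝ => h (x + (p.1 + p.2)))
          ((gaussianReal (n * τ) (n * v)).prod (gaussianReal τ v)) :=
        hint.comp_measurable (f := fun p : ℝ × ℝ => p.1 + p.2) (by fun_prop)
      exact this.integral_prod_left
    have j1 := aux_integrable_shift hc hT (n * τ) (n * v) (x + 1)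
    have j2 := aux_integrable_shift hc hT (n * τ) (n * v) x
    have key : |(τ * ∫ z, h (x + 1 + z) ∂(gaussianReal (n * τ) (n * v))) +
        ((1 - τ) * ∫ z, h (x + z) ∂(gaussianReal (n * τ) (n * v))) -
        ∫ z, (∫ y, h (x + (z + y)) ∂(gaussianReal τ v)) ∂(gaussianReal (n * τ) (n * v))| ≤ D := by
      rw [← integral_const_mul, ← integral_const_mul, ← integral_add (j1.const_mul _)
        (j2.const_mul _), ← integral_sub (by exact (j1.const_mul _).add (j2.const_mul _)) hin2]
      have : ∀ z, ‖τ * h (x + 1 + z) + (1 - τ) * h (x + z) -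
          ∫ y, h (x + (z + y)) ∂(gaussianReal τ v)‖ ≤ D := by
        intro z
        have := aux_step hc hL hT hτ0 hτ1 v hv (x + z)
        rw [show x + z + 1 = x + 1 + z by ring] at this
        simpa only [add_assoc, Real.norm_eq_abs] using this
      have := norm_integral_le_of_norm_le_const (μ := gaussianReal (n * τ) (n * v))
        (Filter.Eventually.of_forall this)
      simpa using this
    rw [binAvg_succ]
    have k1 := ih (x + 1)
    have k2 := ih x
    push_cast
    rw [abs_le] at *
    constructor
    · nlinarith
    · nlinarith

lemma aux_glue {f g f' g' : ℝ → ℝ} (hf : ∀ x, 0 ≤ x → HasDerivAt f (f' x) x)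
    (hg : ∀ x, x ≤ 0 → HasDerivAt g (g' x) x) (h0 : f 0 = g 0) (h1 : f' 0 = g' 0) (x : ℝ) :
    HasDerivAt (fun x => if 0 ≤ x then f x else g x) (if 0 ≤ x then f' x else g' x) x := by
  rcases lt_trichotomy x 0 with hx | hx | hx
  · rw [if_neg (not_le.2 hx)]
    refine (hg x hx.le).congr_of_eventuallyEq ?_
    filter_upwards [Iio_mem_nhds hx] with y hy
    rw [if_neg (not_le.2 hy)]
  · subst hx
    rw [if_pos le_rfl]
    have a1 : HasDerivWithinAt (fun x => if 0 ≤ x then f x else g x) (f' 0) (Set.Ici 0) 0 :=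
      (hf 0 le_rfl).hasDerivWithinAt.congr (fun y hy => if_pos hy) (if_pos le_rfl)
    have a2 : HasDerivWithinAt (fun x => if 0 ≤ x then f x else g x) (f' 0) (Set.Iic 0) 0 := by
      rw [h1]
      refine (hg 0 le_rfl).hasDerivWithinAt.congr (fun y hy => ?_) (by simp [h0])
      rcases eq_or_lt_of_le (show y ≤ 0 from hy) with h | h
      · subst h; simp [h0]
      · exact if_neg (not_le.2 h)
    have := a1.union a2
    rwa [Set.Ici_union_Iic, hasDerivWithinAt_univ] at this
  · rw [if_pos hx.le]
    refine (hf x hx.le).congr_of_eventuallyEq ?_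
    filter_upwards [Ioi_mem_nhds hx] with y hy
    rw [if_pos (le_of_lt hy)]

lemma aux_taylor {H H1 H2 : ℝ → ℝ} {L : ℝ} (hL : 0 ≤ L) (h0 : ∀ x, HasDerivAt H (H1 x) x)
    (h1 : ∀ x, HasDerivAt H1 (H2 x) x) (h2 : ∀ x y, |H2 y - H2 x| ≤ L * |y - x|) (x d : ℝ) :
    |H (x + d) - H x - H1 x * d - (H2 x / 2) * d ^ 2| ≤ L * |d| ^ 3 := by
  have m0 : (0 : ℝ) ∈ Set.Icc (-|d|) |d| := ⟨by simp, by simp⟩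
  have md : d ∈ Set.Icc (-|d|) |d| := ⟨neg_abs_le d, le_abs_self d⟩
  have r1 : ∀ t ∈ Set.Icc (-|d|) |d|, |H1 (x + t) - H1 x - H2 x * t| ≤ L * |d| ^ 2 := by
    intro t ht
    have := Convex.norm_image_sub_le_of_norm_hasDerivWithin_le
      (f := fun t => H1 (x + t) - H1 x - H2 x * t) (f' := fun t => H2 (x + t) - H2 x)
      (C := L * |d|) (s := Set.Icc (-|d|) |d|) ?_ ?_ (convex_Icc _ _) m0 ht
    · simp only [add_zero, sub_self, mul_zero, sub_zero, Real.norm_eq_abs] at this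
      refine this.trans ?_
      have : |t| ≤ |d| := abs_le.2 ht
      rw [pow_two, ← mul_assoc]
      gcongr
    · intro t _
      have e := (((h1 (x + t)).comp_const_add x t).sub_const (H1 x)).sub
        ((hasDerivAt_id t).const_mul (H2 x))
      exact (e.congr_deriv (by simp)).hasDerivWithinAt
    · intro t ht
      refine (h2 _ _).trans ?_
      have : |t| ≤ |d| := abs_le.2 ht
      simp only [add_sub_cancel_left]
      gcongr
  have := Convex.norm_image_sub_le_of_norm_hasDerivWithin_le
      (f := fun t => H (x + t) - H x - H1 x * t - (H2 x / 2) * t ^ 2)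
      (f' := fun t => H1 (x + t) - H1 x - H2 x * t)
      (C := L * |d| ^ 2) (s := Set.Icc (-|d|) |d|) ?_ ?_ (convex_Icc _ _) m0 md
  · simp only [add_zero, sub_self, mul_zero, sub_zero, Real.norm_eq_abs] at this
    refine (le_of_eq ?_).trans (this.trans (le_of_eq ?_))
    · congr 1; ring
    · ring
  · intro t _
    have e := ((((h0 (x + t)).comp_const_add x t).sub_const (H x)).sub
        ((hasDerivAt_id t).const_mul (H1 x))).sub ((hasDerivAt_pow 2 t).const_mul (H2 x / 2))
    refine (e.congr_deriv ?_).hasDerivWithinAt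
    push_cast
    ring
  · exact r1

noncomputable def ext2 (F : ℝ → ℝ) (c1 c2 : ℝ) (x : ℝ) : ℝ :=
  if 0 ≤ x then F x else F 0 + c1 * x + c2 / 2 * x ^ 2

lemma aux_ext {F F1 F2 F3 : ℝ → ℝ} {L : ℝ} (hL : 0 ≤ L)
    (h0 : ∀ x, 0 ≤ x → HasDerivAt F (F1 x) x) (h1 : ∀ x, 0 ≤ x → HasDerivAt F1 (F2 x) x)
    (h2 : ∀ x, 0 ≤ x → HasDerivAt F2 (F3 x) x) (h3 : ∀ x, 0 ≤ x → |F3 x| ≤ L) :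
    Continuous (ext2 F (F1 0) (F2 0)) ∧ ∃ a b : ℝ → ℝ, ∀ x d,
      |ext2 F (F1 0) (F2 0) (x + d) - ext2 F (F1 0) (F2 0) x - a x * d - b x * d ^ 2|
        ≤ L * |d| ^ 3 := by
  have d0 : ∀ x, HasDerivAt (ext2 F (F1 0) (F2 0))
      (if 0 ≤ x then F1 x else F1 0 + F2 0 * x) x := by
    refine aux_glue h0 (fun x _ => ?_) (by simp) (by simp)
    have := (((hasDerivAt_id x).const_mul (F1 0)).const_add (F 0)).add
      ((hasDerivAt_pow 2 x).const_mul (F2 0 / 2))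
    refine this.congr_deriv ?_
    push_cast
    ring
  have d1 : ∀ x, HasDerivAt (fun x => if 0 ≤ x then F1 x else F1 0 + F2 0 * x)
      (if 0 ≤ x then F2 x else F2 0) x := by
    refine aux_glue h1 (fun x _ => ?_) (by simp) (by simp)
    have := ((hasDerivAt_id x).const_mul (F2 0)).const_add (F1 0)
    simpa using this
  refine ⟨continuous_iff_continuousAt.2 fun x => (d0 x).continuousAt, _, _,
    aux_taylor hL d0 d1 ?_⟩
  have e : ∀ x : ℝ, (if 0 ≤ x then F2 x else F2 0) = F2 (max x 0) := by
    intro x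
    split_ifs with h
    · rw [max_eq_left h]
    · rw [max_eq_right (not_le.1 h).le]
  intro x y
  rw [e, e]
  have := Convex.norm_image_sub_le_of_norm_hasDerivWithin_le
      (f := F2) (f' := F3) (C := L) (s := Set.Ici 0) (fun x hx => (h2 x hx).hasDerivWithinAt)
      h3 (convex_Ici 0) (x := max x 0) (y := max y 0)
      (Set.mem_Ici.2 (le_max_right _ _)) (Set.mem_Ici.2 (le_max_right _ _))
  refine this.trans ?_
  gcongr
  exact abs_max_sub_max_le_abs _ _ _

lemma gaussQ_hasDerivAt (x : ℝ) :
    HasDerivAt gaussQ (-((Real.sqrt (2 * Real.pi))⁻¹ * Real.exp (-x ^ 2 / 2))) x := by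
  have hi : Integrable (fun t : ℝ => Real.exp (-t ^ 2 / 2)) := by
    have := integrable_exp_neg_mul_sq (b := 1 / 2) (by norm_num)
    refine this.congr (Filter.Eventually.of_forall fun t => ?_)
    show Real.exp _ = Real.exp _
    congr 1; ring
  have hcont : Continuous (fun t : ℝ => Real.exp (-t ^ 2 / 2)) := by fun_prop
  have e : gaussQ = fun x => (Real.sqrt (2 * Real.pi))⁻¹ *
      ((∫ t in Set.Ioi (0 : ℝ), Real.exp (-t ^ 2 / 2)) - ∫ t in (0 : ℝ)..x, Real.exp (-t ^ 2 / 2)) := by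
    funext y
    rw [gaussQ, ← intervalIntegral.integral_Ioi_sub_Ioi' hi.integrableOn hi.integrableOn]
    congr 1; ring
  rw [e]
  have := (hcont.integral_hasStrictDerivAt 0 x).hasDerivAt
  have := (this.const_sub (∫ t in Set.Ioi (0 : ℝ), Real.exp (-t ^ 2 / 2))).const_mul
    (Real.sqrt (2 * Real.pi))⁻¹
  exact this.congr_deriv (by ring)

lemma gaussQ_nonneg (x : ℝ) : 0 ≤ gaussQ x := by
  unfold gaussQ
  have : 0 ≤ ∫ t in Set.Ioi x, Real.exp (-t ^ 2 / 2) := by positivity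
  positivity

lemma gauss_int (g : ℝ → ℝ) : (Real.sqrt (2 * Real.pi))⁻¹ * ∫ s, g s * Real.exp (-s ^ 2 / 2)
    = ∫ s, g s ∂(gaussianReal 0 1) := by
  rw [integral_gaussianReal_eq_integral_smul (by simp), ← integral_const_mul]
  congr 1; funext s
  simp [gaussianPDFReal]
  ring

lemma gaussQ_le_one (x : ℝ) : gaussQ x ≤ 1 := by
  have h := gauss_int (Set.indicator (Set.Ioi x) 1)
  have e : gaussQ x = (Real.sqrt (2 * Real.pi))⁻¹ *
      ∫ s, (Set.indicator (Set.Ioi x) 1 s : ℝ) * Real.exp (-s ^ 2 / 2) := by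
    unfold gaussQ
    rw [← integral_indicator measurableSet_Ioi]
    congr 2; funext s
    by_cases hs : s ∈ Set.Ioi x <;> simp [hs]
  rw [e, h, integral_indicator_one measurableSet_Ioi]
  exact measureReal_le_one

lemma exp_bounds (w : ℝ) : Real.exp (-w ^ 2 / 2) ≤ 1 ∧ |w| * Real.exp (-w ^ 2 / 2) ≤ 1 ∧
    w ^ 2 * Real.exp (-w ^ 2 / 2) ≤ 2 := by
  have h := Real.add_one_le_exp (w ^ 2 / 2)
  have hp := Real.exp_pos (-w ^ 2 / 2)
  have e : Real.exp (w ^ 2 / 2) * Real.exp (-w ^ 2 / 2) = 1 := by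
    rw [← Real.exp_add]; simp; ring
  refine ⟨Real.exp_le_one_iff.2 (by nlinarith [sq_nonneg w]), ?_, ?_⟩
  · rw [← e]
    gcongr
    nlinarith [sq_nonneg (|w| - 1), sq_abs w]
  · nlinarith [sq_nonneg w]

lemma aux_F (α β : ℝ) (hα : 0 < α) (hβ : 0 ≤ β) : ∃ B1 B2 B3 : ℝ, 0 ≤ B1 ∧ 0 ≤ B2 ∧ 0 ≤ B3 ∧
    ∀ M : ℝ, 1 ≤ M → ∃ F1 F2 F3 : ℝ → ℝ,
      (∀ x, 0 ≤ x → HasDerivAt (fun x : ℝ => gaussQ ((β - α * M + x) /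
              Real.sqrt (α ^ 2 * M + x))) (F1 x) x) ∧
      (∀ x, 0 ≤ x → HasDerivAt F1 (F2 x) x) ∧
      (∀ x, 0 ≤ x → HasDerivAt F2 (F3 x) x) ∧
      |F1 0| ≤ B1 * (Real.sqrt M)⁻¹ ∧ |F2 0| ≤ B2 * (Real.sqrt M)⁻¹ ^ 2 ∧
      ∀ x, 0 ≤ x → |F3 x| ≤ B3 * (Real.sqrt M)⁻¹ ^ 3 := by
  set A := α⁻¹ with hA
  have hA0 : 0 < A := by positivity
  set c1 := α ^ 2 + α + β with hc1
  have hc10 : 0 ≤ c1 := by positivity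
  set A1 := A / 2 + c1 * A ^ 3 / 2 with hA1
  set A2 := A ^ 3 / 4 + 3 * c1 * A ^ 5 / 4 with hA2
  set A3 := 3 * A ^ 5 / 8 + 15 * c1 * A ^ 7 / 8 with hA3
  have hA10 : 0 ≤ A1 := by positivity
  have hA20 : 0 ≤ A2 := by positivity
  have hA30 : 0 ≤ A3 := by positivity
  refine ⟨A1, A1 ^ 2 + A2, 3 * A1 ^ 3 + 3 * A1 * A2 + A3, by positivity, by positivity,
    by positivity, ?_⟩
  intro M hM
  set q := (Real.sqrt M)⁻¹ with hq
  have hM0 : 0 < M := by linarith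
  have hsM : 1 ≤ Real.sqrt M := by rw [Real.one_le_sqrt]; exact hM
  have hq0 : 0 < q := by positivity
  have hq1 : q ≤ 1 := inv_le_one_of_one_le₀ hsM
  have hqM : M * q ^ 2 = 1 := by
    rw [hq, inv_pow, Real.sq_sqrt hM0.le]; field_simp
  set c := α ^ 2 * M + α * M - β with hc
  have hcq : |c| * q ^ 2 ≤ c1 := by
    have : |c| ≤ c1 * M := by
      rw [abs_le]
      constructor <;> nlinarith [mul_pos hα hM0, mul_pos (pow_pos hα 2) hM0]
    calc |c| * q ^ 2 ≤ c1 * M * q ^ 2 := by gcongr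
      _ = c1 := by rw [mul_assoc, hqM, mul_one]
  set t : ℝ → ℝ := fun x => Real.sqrt (α ^ 2 * M + x) with ht
  set r : ℝ → ℝ := fun x => (t x)⁻¹ with hr
  have hy : ∀ x, 0 ≤ x → 0 < α ^ 2 * M + x := fun x hx => by positivity
  have htp : ∀ x, 0 ≤ x → 0 < t x := fun x hx => Real.sqrt_pos.2 (hy x hx)
  have dt : ∀ x, 0 ≤ x → HasDerivAt t (r x / 2) x := by
    intro x hx
    have := ((hasDerivAt_id x).const_add (α ^ 2 * M)).sqrt (hy x hx).ne'
    refine this.congr_deriv ?_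
    simp only [hr, ht, id]
    field_simp
  have dr : ∀ x, 0 ≤ x → HasDerivAt r (-(r x) ^ 3 / 2) x := by
    intro x hx
    refine ((dt x hx).inv (htp x hx).ne').congr_deriv ?_
    have := (htp x hx).ne'
    simp only [hr]
    field_simp
  have hr0 : ∀ x, 0 ≤ r x := fun x => inv_nonneg.2 (Real.sqrt_nonneg _)
  have hrA : ∀ x, 0 ≤ x → r x ≤ A * q := by
    intro x hx
    have : α * Real.sqrt M ≤ t x := by
      simp only [ht]
      apply Real.le_sqrt_of_sq_le
      rw [mul_pow, Real.sq_sqrt hM0.le]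
      linarith
    rw [hA, hq, ← mul_inv]
    exact inv_anti₀ (by positivity) this
  set W : ℝ → ℝ := fun x => t x - c * r x with hW
  set W1 : ℝ → ℝ := fun x => r x / 2 + c * r x ^ 3 / 2 with hW1
  set W2 : ℝ → ℝ := fun x => -r x ^ 3 / 4 - 3 * c * r x ^ 5 / 4 with hW2
  set W3 : ℝ → ℝ := fun x => 3 * r x ^ 5 / 8 + 15 * c * r x ^ 7 / 8 with hW3
  have dW : ∀ x, 0 ≤ x → HasDerivAt W (W1 x) x := by
    intro x hx
    refine ((dt x hx).sub ((dr x hx).const_mul c)).congr_deriv ?_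
    simp only [hW1]; ring
  have dW1 : ∀ x, 0 ≤ x → HasDerivAt W1 (W2 x) x := by
    intro x hx
    refine (((dr x hx).div_const 2).add ((((dr x hx).pow 3).const_mul c).div_const 2)).congr_deriv ?_
    simp only [hW2]; push_cast; ring
  have dW2 : ∀ x, 0 ≤ x → HasDerivAt W2 (W3 x) x := by
    intro x hx
    refine ((((dr x hx).pow 3).neg.div_const 4).sub
      ((((dr x hx).pow 5).const_mul (3 * c)).div_const 4)).congr_deriv ?_
    simp only [hW3]; push_cast; ring
  have pw : ∀ (k : ℕ) x, 0 ≤ x → r x ^ k ≤ A ^ k * q ^ k := by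
    intro k x hx
    rw [← mul_pow]
    exact pow_le_pow_left₀ (hr0 x) (hrA x hx) k
  have pc : ∀ (k : ℕ) x, 0 ≤ x → |c| * r x ^ (k + 2) ≤ c1 * A ^ (k + 2) * q ^ k := by
    intro k x hx
    calc |c| * r x ^ (k + 2) ≤ |c| * (A ^ (k + 2) * q ^ (k + 2)) := by
          gcongr; exact pw _ x hx
      _ = (|c| * q ^ 2) * (A ^ (k + 2) * q ^ k) := by ring
      _ ≤ c1 * (A ^ (k + 2) * q ^ k) := by gcongr
      _ = _ := by ring
  have acr : ∀ (k : ℕ) x, |c * r x ^ k| = |c| * r x ^ k := by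
    intro k x
    rw [abs_mul, abs_of_nonneg (pow_nonneg (hr0 x) k)]
  have bW1 : ∀ x, 0 ≤ x → |W1 x| ≤ A1 * q := by
    intro x hx
    have h1 := pw 1 x hx
    have h2 := pc 1 x hx
    have h0 := hr0 x
    have h3 := acr 3 x
    norm_num at h2
    rw [pow_one, pow_one, pow_one] at h1
    rw [← h3, abs_le] at h2
    simp only [hW1, hA1]
    rw [abs_le]
    constructor <;> linarith
  have bW2 : ∀ x, 0 ≤ x → |W2 x| ≤ A2 * q ^ 3 := by
    intro x hx
    have h1 := pw 3 x hx
    have h2 := pc 3 x hx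
    have h0 := pow_nonneg (hr0 x) 3
    have h3 := acr 5 x
    norm_num at h2
    rw [← h3, abs_le] at h2
    simp only [hW2, hA2]
    rw [abs_le]
    constructor <;> linarith
  have bW3 : ∀ x, 0 ≤ x → |W3 x| ≤ A3 * q ^ 3 := by
    intro x hx
    have h1 := pw 5 x hx
    have h2 := pc 5 x hx
    have h0 := pow_nonneg (hr0 x) 5
    have h3 := acr 7 x
    norm_num at h2
    rw [← h3, abs_le] at h2
    have : A3 * q ^ 5 ≤ A3 * q ^ 3 :=
      mul_le_mul_of_nonneg_left (pow_le_pow_of_le_one hq0.le hq1 (by norm_num)) hA30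
    refine le_trans ?_ this
    simp only [hW3, hA3]
    rw [abs_le]
    constructor <;> linarith
  set ρ := (Real.sqrt (2 * Real.pi))⁻¹ with hρ
  have hρ0 : 0 ≤ ρ := by positivity
  have hρ1 : ρ ≤ 1 := by
    apply inv_le_one_of_one_le₀
    rw [Real.one_le_sqrt]
    nlinarith [Real.pi_gt_three]
  set P : ℝ → ℝ := fun x => ρ * Real.exp (-(W x) ^ 2 / 2) with hP
  have dP : ∀ x, 0 ≤ x → HasDerivAt P (-(W x * W1 x * P x)) x := by
    intro x hx
    refine ((((dW x hx).pow 2).neg.div_const 2).exp.const_mul ρ).congr_deriv ?_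
    simp only [hP, Pi.neg_apply, Pi.pow_apply]; push_cast; ring
  have hP0 : ∀ x, 0 ≤ P x := fun x => by positivity
  have bP : ∀ x, P x ≤ 1 ∧ |W x| * P x ≤ 1 ∧ W x ^ 2 * P x ≤ 2 := by
    intro x
    obtain ⟨h1, h2, h3⟩ := exp_bounds (W x)
    have he := Real.exp_pos (-(W x) ^ 2 / 2)
    have hPe : P x ≤ Real.exp (-(W x) ^ 2 / 2) := mul_le_of_le_one_left he.le hρ1
    refine ⟨hPe.trans h1, le_trans ?_ h2, le_trans ?_ h3⟩ <;> gcongr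
  refine ⟨fun x => -(P x * W1 x), fun x => P x * (W x * W1 x ^ 2 - W2 x),
    fun x => P x * (-(W x ^ 2 - 1) * W1 x ^ 3 + 3 * (W x * W1 x * W2 x) - W3 x),
    ?_, ?_, ?_, ?_, ?_, ?_⟩
  · intro x hx
    have e : (fun x : ℝ => gaussQ ((β - α * M + x) / Real.sqrt (α ^ 2 * M + x))) =
        fun x => gaussQ (W x) := by
      funext x
      congr 1
      simp only [hW, hr, ht]
      nth_rewrite 2 [← Real.div_sqrt]
      rw [← div_eq_mul_inv, ← sub_div]
      congr 1
      rw [hc]; ring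
    rw [e]
    refine ((gaussQ_hasDerivAt (W x)).comp x (dW x hx)).congr_deriv ?_
    simp only [hP]; ring
  · intro x hx
    refine ((dP x hx).mul (dW1 x hx)).neg.congr_deriv ?_
    ring
  · intro x hx
    refine ((dP x hx).mul (((dW x hx).mul ((dW1 x hx).pow 2)).sub (dW2 x hx))).congr_deriv ?_
    simp only [Pi.mul_apply, Pi.sub_apply, Pi.pow_apply]
    push_cast
    ring
  · obtain ⟨h1, h2, h3⟩ := bP 0
    rw [abs_neg, abs_mul, abs_of_nonneg (hP0 0)]
    exact (mul_le_of_le_one_left (abs_nonneg _) h1).trans (bW1 0 le_rfl)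
  · obtain ⟨h1, h2, h3⟩ := bP 0
    have k1 := bW1 0 le_rfl
    have k2 := bW2 0 le_rfl
    have e : P 0 * (W 0 * W1 0 ^ 2 - W2 0) = (W 0 * P 0) * W1 0 ^ 2 - P 0 * W2 0 := by ring
    simp only [e]
    calc |(W 0 * P 0) * W1 0 ^ 2 - P 0 * W2 0|
        ≤ |(W 0 * P 0) * W1 0 ^ 2| + |P 0 * W2 0| := abs_sub _ _
      _ = (|W 0| * P 0) * |W1 0| ^ 2 + P 0 * |W2 0| := by
          simp only [abs_mul, abs_pow, abs_of_nonneg (hP0 0)]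
      _ ≤ 1 * (A1 * q) ^ 2 + 1 * (A2 * q ^ 3) := by
          have := hP0 0
          gcongr
      _ ≤ 1 * (A1 * q) ^ 2 + 1 * (A2 * q ^ 2) := by
          have : q ^ 3 ≤ q ^ 2 := pow_le_pow_of_le_one hq0.le hq1 (by norm_num)
          gcongr
      _ = _ := by ring
  · intro x hx
    obtain ⟨h1, h2, h3⟩ := bP x
    have k1 := bW1 x hx
    have k2 := bW2 x hx
    have k3 := bW3 x hx
    have e : P x * (-(W x ^ 2 - 1) * W1 x ^ 3 + 3 * (W x * W1 x * W2 x) - W3 x) =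
      (-(W x ^ 2 * P x) * W1 x ^ 3 + P x * W1 x ^ 3 + 3 * ((W x * P x) * W1 x * W2 x)) +
        (- (P x * W3 x)) := by ring
    simp only [e]
    calc _ ≤ |-(W x ^ 2 * P x) * W1 x ^ 3| + |P x * W1 x ^ 3| +
          |3 * ((W x * P x) * W1 x * W2 x)| + |- (P x * W3 x)| :=
          (abs_add_le _ _).trans (add_le_add_left (abs_add_three _ _ _) _)
      _ = (W x ^ 2 * P x) * |W1 x| ^ 3 + P x * |W1 x| ^ 3 +
          3 * ((|W x| * P x) * |W1 x| * |W2 x|) + P x * |W3 x| := by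
          simp only [abs_mul, abs_pow, abs_neg, abs_of_nonneg (hP0 x), sq_abs, Nat.abs_ofNat]
      _ ≤ 2 * (A1 * q) ^ 3 + 1 * (A1 * q) ^ 3 +
          3 * (1 * (A1 * q) * (A2 * q ^ 3)) + 1 * (A3 * q ^ 3) := by
          have := hP0 x
          gcongr
      _ = 3 * A1 ^ 3 * q ^ 3 + 3 * (A1 * A2) * q ^ 4 + A3 * q ^ 3 := by ring
      _ ≤ 3 * A1 ^ 3 * q ^ 3 + 3 * (A1 * A2) * q ^ 3 + A3 * q ^ 3 := by
          have : q ^ 4 ≤ q ^ 3 := pow_le_pow_of_le_one hq0.le hq1 (by norm_num)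
          gcongr
      _ = _ := by ring

lemma gaussQ_continuous : Continuous gaussQ :=
  continuous_iff_continuousAt.2 fun x => (gaussQ_hasDerivAt x).continuousAt

lemma aux_map (h : ℝ → ℝ) (hc : Continuous h) (τ : ℝ) (v : NNReal) (n : ℕ) (σ : ℝ)
    (hσ : σ ^ 2 = n * v) :
    ∫ z, h z ∂(gaussianReal (n * τ) (n * v)) = ∫ s, h (n * τ + σ * s) ∂(gaussianReal 0 1) := by
  have e : gaussianReal (n * τ) (n * v) =
      (gaussianReal 0 1).map (fun s => n * τ + σ * s) := by
    have h1 := gaussianReal_map_const_mul (μ := 0) (v := 1) σ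
    have h2 : (gaussianReal 0 1).map (fun s => n * τ + σ * s) =
        ((gaussianReal 0 1).map (fun s => σ * s)).map (fun s => n * τ + s) := by
      rw [Measure.map_map (by fun_prop) (by fun_prop)]
      rfl
    rw [h2, h1, gaussianReal_map_const_add]
    congr 1
    · ring
    · apply NNReal.eq
      push_cast
      simp [hσ]
  rw [e, integral_map (by fun_prop) (by fun_prop)]

set_option maxHeartbeats 1600000 in
theorem aux_main
    (α τ ζ β : ℝ) (hα : 0 < α) (hτ0 : 0 < τ) (hτ1 : τ < 1) (hζ : 0 < ζ)
    (hβ : 0 ≤ β) :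
    ∃ K : ℝ, 0 < K ∧ ∀ n : ℕ, 1 ≤ n → ∀ M : ℝ, 1 ≤ M → ζ * ((n : ℝ) + 1) ≤ M →
      |(∑ k ∈ Finset.range (n + 1), (n.choose k : ℝ) * τ ^ k *
            (1 - τ) ^ (n - k) *
            gaussQ ((β - α * M + (k : ℝ)) /
              Real.sqrt (α ^ 2 * M + (k : ℝ)))) -
            ∫ s : ℝ,
              (if 0 < α ^ 2 * M +
                    s * Real.sqrt ((n : ℝ) * τ * (1 - τ)) +
                    (n : ℝ) * τ then
                gaussQ ((β - α * M +
                    s * Real.sqrt ((n : ℝ) * τ * (1 - τ)) +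
                    (n : ℝ) * τ) /
                  Real.sqrt (α ^ 2 * M +
                    s * Real.sqrt ((n : ℝ) * τ * (1 - τ)) +
                    (n : ℝ) * τ))
              else gaussQ 0) ∂(gaussianReal 0 1)|
        ≤ K * (Real.sqrt ((n : ℝ) + 1))⁻¹ := by
  obtain ⟨B1, B2, B3, hB1, hB2, hB3, hB⟩ := aux_F α β hα hβ
  set z := (Real.sqrt ζ)⁻¹ with hz
  have hz0 : 0 < z := by positivity
  have hτ' : 0 < 1 - τ := by linarith
  set v : NNReal := ⟨τ * (1 - τ), by positivity⟩ with hv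
  have hvv : (v : ℝ) = τ * (1 - τ) := rfl
  set κ := ∫ z, |z| ^ 3 ∂(gaussianReal 0 v) with hκ
  have hκ0 : 0 ≤ κ := integral_nonneg fun z => by positivity
  set m1 := ∫ z, |z| ^ 1 ∂(gaussianReal 0 1)
  set m2 := ∫ z, |z| ^ 2 ∂(gaussianReal 0 1)
  set m3 := ∫ z, |z| ^ 3 ∂(gaussianReal 0 1)
  have hm1 : 0 ≤ m1 := integral_nonneg fun z => by positivity
  have hm2 : 0 ≤ m2 := integral_nonneg fun z => by positivity
  have hm3 : 0 ≤ m3 := integral_nonneg fun z => by positivity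
  refine ⟨z ^ 3 * (B3 * (1 + κ)) + (2 / τ) * (2 * m1 + B1 * z * m2 + B2 * z ^ 2 * m3) + 1,
    by positivity, ?_⟩
  intro n hn M hM hζM
  obtain ⟨F1, F2, F3, d0, d1, d2, b1, b2, b3⟩ := hB M hM
  set F : ℝ → ℝ := fun x => gaussQ ((β - α * M + x) / Real.sqrt (α ^ 2 * M + x)) with hF
  set q := (Real.sqrt M)⁻¹ with hq
  set p := (Real.sqrt ((n : ℝ) + 1))⁻¹ with hp
  have hn1 : (1 : ℝ) ≤ n := by exact_mod_cast hn
  have hp0 : 0 < p := by positivity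
  have hM0 : 0 < M := by linarith
  have hq0 : 0 < q := by positivity
  have hqz : q ≤ z * p := by
    rw [hq, hz, hp, ← mul_inv, ← Real.sqrt_mul hζ.le]
    exact inv_anti₀ (by positivity) (Real.sqrt_le_sqrt hζM)
  have hNp : ((n : ℝ) + 1) * p ^ 2 = 1 := by
    rw [hp, inv_pow, Real.sq_sqrt (by positivity)]; field_simp
  set σ := Real.sqrt ((n : ℝ) * τ * (1 - τ)) with hσ
  have hσ2 : σ ^ 2 = n * τ * (1 - τ) := Real.sq_sqrt (by positivity)
  have hσ0 : 0 ≤ σ := Real.sqrt_nonneg _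
  have hσn : σ ^ 2 ≤ n := by
    rw [hσ2, mul_assoc]
    exact mul_le_of_le_one_right (by positivity) (by nlinarith)
  have hpσ : p * σ ≤ 1 := by
    have : (p * σ) ^ 2 ≤ 1 ^ 2 := by nlinarith [pow_pos hp0 2]
    exact le_of_sq_le_sq this (by norm_num)
  have hqσ : q * σ ≤ z := by
    calc q * σ ≤ z * p * σ := by gcongr
      _ = z * (p * σ) := by ring
      _ ≤ z * 1 := by gcongr
      _ = z := mul_one z
  obtain ⟨hEc, a, b, hT⟩ := aux_ext (L := B3 * q ^ 3) (by positivity) d0 d1 d2 b3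
  set E := ext2 F (F1 0) (F2 0) with hE
  have lind := aux_lindeberg hEc (by positivity) hT hτ0 hτ1 v hvv n 0
  have eS : binAvg τ E n 0 = ∑ k ∈ Finset.range (n + 1), (n.choose k : ℝ) * τ ^ k *
            (1 - τ) ^ (n - k) *
            gaussQ ((β - α * M + (k : ℝ)) / Real.sqrt (α ^ 2 * M + (k : ℝ))) := by
    unfold binAvg
    refine Finset.sum_congr rfl fun k _ => ?_
    rw [zero_add]
    congr 1
    rw [hE, ext2, if_pos (Nat.cast_nonneg k)]
  simp only [zero_add] at lind
  rw [eS, aux_map E hEc τ v n σ (by rw [hσ2, hvv]; ring)] at lind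
  set S := ∑ k ∈ Finset.range (n + 1), (n.choose k : ℝ) * τ ^ k *
            (1 - τ) ^ (n - k) *
            gaussQ ((β - α * M + (k : ℝ)) / Real.sqrt (α ^ 2 * M + (k : ℝ)))
  set g : ℝ → ℝ := fun s => if 0 < α ^ 2 * M + s * σ + (n : ℝ) * τ then
                gaussQ ((β - α * M + s * σ + (n : ℝ) * τ) /
                  Real.sqrt (α ^ 2 * M + s * σ + (n : ℝ) * τ)) else gaussQ 0 with hg
  have hgm : Measurable g := by
    refine Measurable.ite ?_ ?_ measurable_const
    · exact measurableSet_lt measurable_const (by fun_prop)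
    · exact gaussQ_continuous.measurable.comp (by fun_prop)
  have hgb : ∀ s, 0 ≤ g s ∧ g s ≤ 1 := by
    intro s
    simp only [hg]
    split_ifs
    · exact ⟨gaussQ_nonneg _, gaussQ_le_one _⟩
    · exact ⟨gaussQ_nonneg _, gaussQ_le_one _⟩
  have hgi : Integrable g (gaussianReal 0 1) := by
    refine (integrable_const (1 : ℝ)).mono' hgm.aestronglyMeasurable
      (Filter.Eventually.of_forall fun s => ?_)
    rw [Real.norm_eq_abs, abs_of_nonneg (hgb s).1]
    exact (hgb s).2
  have hEi : Integrable (fun s => E (n * τ + σ * s)) (gaussianReal 0 1) := by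
    have h1 := aux_integrable_shift hEc hT 0 (⟨σ ^ 2, sq_nonneg σ⟩ * 1) (n * τ)
    have h2 := gaussianReal_map_const_mul (μ := 0) (v := 1) σ
    rw [mul_zero] at h2
    have h3 : Integrable (fun z => E (n * τ + z)) ((gaussianReal 0 1).map (fun x => σ * x)) := by
      rw [h2]; exact h1
    exact h3.comp_measurable (by fun_prop)
  have hpt : ∀ s, ‖E (n * τ + σ * s) - g s‖ ≤
      p * ((2 / τ) * (2 * |s| ^ 1 + B1 * z * |s| ^ 2 + B2 * z ^ 2 * |s| ^ 3)) := by
    intro s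
    by_cases hx : 0 ≤ n * τ + σ * s
    · have : E (n * τ + σ * s) = g s := by
        simp only [hE, ext2, hg, hF]
        rw [if_pos hx, if_pos]
        · congr 2
          · ring
          · congr 1; ring
        · have : 0 < α ^ 2 * M := by positivity
          linarith
      rw [this, sub_self, norm_zero]
      positivity
    · have hx' := not_le.1 hx
      set x := n * τ + σ * s with hxd
      have hxs : |x| ≤ σ * |s| := by
        rw [abs_of_neg hx']
        have : 0 ≤ n * τ := by positivity
        have := neg_abs_le s
        nlinarith
      have hτs : τ ≤ 2 * p * |s| := by
        have s1 : (n * τ) ^ 2 ≤ (σ * s) ^ 2 := by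
          have : 0 ≤ n * τ := by positivity
          nlinarith
        have s2 : n * τ ^ 2 ≤ s ^ 2 := by
          have : n * (n * τ ^ 2) ≤ n * s ^ 2 := by nlinarith [sq_nonneg s]
          exact le_of_mul_le_mul_left this (by linarith)
        have s3 : τ ^ 2 ≤ (2 * p * |s|) ^ 2 := by
          have : (n + 1) * τ ^ 2 ≤ 4 * s ^ 2 := by nlinarith [sq_nonneg τ]
          calc τ ^ 2 = ((n + 1) * τ ^ 2) * p ^ 2 := by linear_combination (-τ ^ 2) * hNp
            _ ≤ 4 * s ^ 2 * p ^ 2 := by gcongr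
            _ = _ := by rw [mul_pow, sq_abs]; ring
        exact le_of_sq_le_sq s3 (by positivity)
      have e1 : E x = F 0 + F1 0 * x + F2 0 / 2 * x ^ 2 := by
        rw [hE, ext2, if_neg hx]
      have hF0 : 0 ≤ F 0 ∧ F 0 ≤ 1 := ⟨gaussQ_nonneg _, gaussQ_le_one _⟩
      have t1 : |F1 0 * x| ≤ B1 * z * |s| := by
        rw [abs_mul]
        calc |F1 0| * |x| ≤ (B1 * q) * (σ * |s|) := by gcongr
          _ = B1 * (q * σ) * |s| := by ring
          _ ≤ _ := by gcongr
      have t2 : |F2 0 / 2 * x ^ 2| ≤ B2 * z ^ 2 * |s| ^ 2 := by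
        rw [abs_mul, abs_div, abs_pow]
        calc |F2 0| / |2| * |x| ^ 2 ≤ |F2 0| * |x| ^ 2 := by
              gcongr
              exact div_le_self (abs_nonneg _) (by norm_num)
          _ ≤ (B2 * q ^ 2) * (σ * |s|) ^ 2 := by gcongr
          _ = B2 * (q * σ) ^ 2 * |s| ^ 2 := by ring
          _ ≤ _ := by gcongr
      have t3 : ‖E x - g s‖ ≤ 2 + B1 * z * |s| + B2 * z ^ 2 * |s| ^ 2 := by
        rw [e1, Real.norm_eq_abs]
        have := hgb s
        rw [abs_le] at *
        constructor <;> linarith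
      refine t3.trans ?_
      have hone : 1 ≤ 2 * p * |s| / τ := by rw [le_div_iff₀ hτ0]; linarith
      calc 2 + B1 * z * |s| + B2 * z ^ 2 * |s| ^ 2
          ≤ (2 * p * |s| / τ) * (2 + B1 * z * |s| + B2 * z ^ 2 * |s| ^ 2) :=
            le_mul_of_one_le_left (by positivity) hone
        _ = _ := by ring
  have hdiff : |(∫ s, E (n * τ + σ * s) ∂(gaussianReal 0 1)) - ∫ s, g s ∂(gaussianReal 0 1)| ≤
      p * ((2 / τ) * (2 * m1 + B1 * z * m2 + B2 * z ^ 2 * m3)) := by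
    rw [← integral_sub hEi hgi, ← Real.norm_eq_abs]
    have i1 := (aux_moment 0 1 1).const_mul 2
    have i2 := (aux_moment 0 1 2).const_mul (B1 * z)
    have i3 := (aux_moment 0 1 3).const_mul (B2 * z ^ 2)
    refine (norm_integral_le_of_norm_le ((((i1.add i2).add i3).const_mul (2 / τ)).const_mul p)
      (Filter.Eventually.of_forall hpt)).trans (le_of_eq ?_)
    rw [integral_const_mul, integral_const_mul]
    congr 2
    have := integral_add (i1.add i2) i3
    have h' := integral_add i1 i2
    simp only [Pi.add_apply] at this h' ⊢
    rw [this, h', integral_const_mul, integral_const_mul, integral_const_mul]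
  have hlin : n * (B3 * q ^ 3 * (1 + κ)) ≤ z ^ 3 * (B3 * (1 + κ)) * p := by
    calc n * (B3 * q ^ 3 * (1 + κ)) ≤ (n + 1) * (B3 * (z * p) ^ 3 * (1 + κ)) := by
          gcongr
          linarith
      _ = z ^ 3 * (B3 * (1 + κ)) * p * ((n + 1) * p ^ 2) := by ring
      _ = _ := by rw [hNp, mul_one]
  have := abs_sub_le S (∫ s, E (n * τ + σ * s) ∂(gaussianReal 0 1)) (∫ s, g s ∂(gaussianReal 0 1))
  linarith

/-- Lemma 2: the Binomial(N−1, τ) average of `Q(w(k))`, with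
`w(k) = (β − αM + k)/√(α²M + k)` and `M = ⌈ζN⌉`, equals its Gaussian-mixture
approximation (via the substitution `k = (N−1)τ + s√((N−1)τ(1−τ))`) up to an
error of order `1/√N`; for `s` making the radicand in the denominator
nonpositive the integrand is taken to be `Q(0) = 1/2`. -/
theorem binomial_average_gaussian_approximation
    (α τ ζ β : ℝ) (hα : 0 < α) (hτ0 : 0 < τ) (hτ1 : τ < 1) (hζ : 0 < ζ)
    (hβ : 0 ≤ β) :
    ∃ K : ℝ, 0 < K ∧ ∀ N : ℕ, 2 ≤ N → ∀ M : ℕ, M = Nat.ceil (ζ * (N : ℝ)) →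
      |(∑ k ∈ Finset.range N, ((N - 1).choose k : ℝ) * τ ^ k *
            (1 - τ) ^ (N - 1 - k) *
            gaussQ ((β - α * (M : ℝ) + (k : ℝ)) /
              Real.sqrt (α ^ 2 * (M : ℝ) + (k : ℝ)))) -
          (Real.sqrt (2 * Real.pi))⁻¹ *
            ∫ s : ℝ,
              (if 0 < α ^ 2 * (M : ℝ) +
                    s * Real.sqrt (((N : ℝ) - 1) * τ * (1 - τ)) +
                    ((N : ℝ) - 1) * τ then
                gaussQ ((β - α * (M : ℝ) +
                    s * Real.sqrt (((N : ℝ) - 1) * τ * (1 - τ)) +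
                    ((N : ℝ) - 1) * τ) /
                  Real.sqrt (α ^ 2 * (M : ℝ) +
                    s * Real.sqrt (((N : ℝ) - 1) * τ * (1 - τ)) +
                    ((N : ℝ) - 1) * τ))
              else gaussQ 0) * Real.exp (-s ^ 2 / 2)|
        ≤ K / Real.sqrt N := by
  obtain ⟨K, hK, h⟩ := aux_main α τ ζ β hα hτ0 hτ1 hζ hβ
  refine ⟨K, hK, ?_⟩
  intro N hN M hM
  obtain ⟨n, rfl⟩ : ∃ n, N = n + 1 := ⟨N - 1, by omega⟩
  have hle : ζ * ((n : ℝ) + 1) ≤ (M : ℝ) := by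
    have := Nat.le_ceil (ζ * ((n + 1 : ℕ) : ℝ))
    rw [← hM] at this
    push_cast at this
    exact this
  have hM1 : (1 : ℝ) ≤ (M : ℝ) := by
    have : 0 < (M : ℝ) := lt_of_lt_of_le (by positivity) hle
    exact_mod_cast this
  have := h n (by omega) M hM1 hle
  rw [← gauss_int] at this
  rw [div_eq_mul_inv]
  have e : (((n + 1 : ℕ) : ℝ) - 1) = n := by push_cast; ring
  rw [e, Nat.add_sub_cancel]
  push_cast
  exact this
end

section
/- Fix α > 0, τ ∈ (0,1), ζ > 0, β ≥ 0 and s ∈ ℝ. There exist a constant C > 0 and a positive integer N₀ such that for every integer N ≥ N₀ the denominator below is positive and | (β − α·ζ·N + s·√(N·τ(1−τ)) + N·τ)/√(α²·ζ·N + s·√(N·τ(1−τ)) + N·τ) − √N·(τ − α·ζ)/√(α²·ζ + τ) | ≤ C. -/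
theorem aux_bound (a x d σ k β : ℝ) (ha : 0 < a) (hx : 1 ≤ x) (hd : 0 < d) (hβ : 0 ≤ β)
    (hda : a * x / 2 ≤ d) (hD : d ^ 2 = a ^ 2 * x ^ 2 + σ * x) :
    |(β + σ * x + k * x ^ 2) / d - x * k / a| ≤
      2 * (β + |σ|) / a + 2 * |k| * |σ| / a ^ 3 := by
  have hx0 : 0 < x := by linarith
  have hax : 0 < a * x := by positivity
  have e : (β + σ * x + k * x ^ 2) / d - x * k / a
      = (β + σ * x) / d + k * x * (a * x - d) / (a * d) := by
    field_simp
    ring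
  have h1 : |a * x - d| ≤ |σ| / a := by
    rw [le_div_iff₀ ha]
    have h2 : |a * x - d| * (a * x + d) = |σ| * x := by
      rw [← abs_of_pos (by linarith : 0 < a * x + d), ← abs_mul,
        show (a * x - d) * (a * x + d) = -(σ * x) by linarith [hD, sq_nonneg x,
          (by ring : (a * x - d) * (a * x + d) = a ^ 2 * x ^ 2 - d ^ 2)],
        abs_neg, abs_mul, abs_of_pos hx0]
    have h3 : |a * x - d| * a * x ≤ |σ| * x := by
      nlinarith [mul_nonneg (abs_nonneg (a * x - d)) hd.le]
    exact le_of_mul_le_mul_right h3 hx0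
  rw [e]
  refine (abs_add_le _ _).trans (add_le_add ?_ ?_)
  · rw [abs_div, abs_of_pos hd]
    have h4 : |β + σ * x| ≤ (β + |σ|) * x := by
      refine (abs_add_le _ _).trans ?_
      rw [abs_mul, abs_of_nonneg hβ, abs_of_pos hx0]
      nlinarith
    calc |β + σ * x| / d ≤ ((β + |σ|) * x) / (a * x / 2) := by gcongr
      _ = _ := by field_simp
  · rw [abs_div, abs_mul, abs_mul, abs_of_pos hx0, abs_of_pos (mul_pos ha hd)]
    calc |k| * x * |a * x - d| / (a * d) ≤ |k| * x * (|σ| / a) / (a * (a * x / 2)) := by gcongr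
      _ = _ := by field_simp

/-- Lemmas 4 and 5 combined: at any fixed `s`, replacing the Gaussian-substituted
Q-function argument by its leading term `√N (τ − αζ)/√(α²ζ + τ)` introduces an
error that stays bounded as `N → ∞`. -/
theorem leading_term_error_bounded
    (α τ ζ β s : ℝ) (hα : 0 < α) (hτ0 : 0 < τ) (hτ1 : τ < 1) (hζ : 0 < ζ)
    (hβ : 0 ≤ β) :
    ∃ C : ℝ, 0 < C ∧ ∃ N₀ : ℕ, 0 < N₀ ∧ ∀ N : ℕ, N₀ ≤ N →
      0 < α ^ 2 * ζ * (N : ℝ) + s * Real.sqrt ((N : ℝ) * τ * (1 - τ)) +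
          (N : ℝ) * τ ∧
      |(β - α * ζ * (N : ℝ) + s * Real.sqrt ((N : ℝ) * τ * (1 - τ)) +
            (N : ℝ) * τ) /
          Real.sqrt (α ^ 2 * ζ * (N : ℝ) +
            s * Real.sqrt ((N : ℝ) * τ * (1 - τ)) + (N : ℝ) * τ) -
        Real.sqrt N * (τ - α * ζ) / Real.sqrt (α ^ 2 * ζ + τ)| ≤ C := by
  have hA : 0 < α ^ 2 * ζ + τ := by positivity
  set A := α ^ 2 * ζ + τ with hAdef
  set σ := s * Real.sqrt (τ * (1 - τ)) with hσ
  have ha : 0 < Real.sqrt A := Real.sqrt_pos.2 hA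
  refine ⟨2 * (β + |σ|) / Real.sqrt A + 2 * |τ - α * ζ| * |σ| / Real.sqrt A ^ 3 + 1,
    by positivity, ⌈(2 * |σ| / A) ^ 2⌉₊ + 1, by omega, ?_⟩
  intro N hN
  have hN1 : (1 : ℝ) ≤ N := by exact_mod_cast (by omega : 1 ≤ N)
  have hN2 : (2 * |σ| / A) ^ 2 ≤ N :=
    (Nat.le_ceil _).trans (by exact_mod_cast (by omega : ⌈(2 * |σ| / A) ^ 2⌉₊ ≤ N))
  have hx1 : 1 ≤ Real.sqrt N := Real.one_le_sqrt.2 hN1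
  have hx2 : 2 * |σ| / A ≤ Real.sqrt N := Real.le_sqrt_of_sq_le hN2
  have hxs : Real.sqrt N ^ 2 = N := Real.sq_sqrt (by linarith)
  have hs : s * Real.sqrt ((N : ℝ) * τ * (1 - τ)) = σ * Real.sqrt N := by
    rw [mul_assoc, Real.sqrt_mul (by linarith), hσ]
    ring
  rw [hs]
  set x := Real.sqrt N with hx
  have hx0 : 0 < x := by linarith
  rw [div_le_iff₀ hA] at hx2
  have hD : α ^ 2 * ζ * (N : ℝ) + σ * x + N * τ = A * x ^ 2 + σ * x := by
    rw [hxs, hAdef]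
    ring
  rw [hD]
  have hDl : A * x ^ 2 / 2 ≤ A * x ^ 2 + σ * x := by
    nlinarith [neg_abs_le σ]
  have hAx : 0 < A * x ^ 2 := by positivity
  have hDp : 0 < A * x ^ 2 + σ * x := by linarith
  refine ⟨hDp, ?_⟩
  have hn : β - α * ζ * (N : ℝ) + σ * x + N * τ = β + σ * x + (τ - α * ζ) * x ^ 2 := by
    rw [hxs]
    ring
  rw [hn]
  have hAs : Real.sqrt A ^ 2 = A := Real.sq_sqrt hA.le
  have := aux_bound (Real.sqrt A) x (Real.sqrt (A * x ^ 2 + σ * x)) σ (τ - α * ζ) β ha hx1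
    (Real.sqrt_pos.2 hDp) hβ
    (Real.le_sqrt_of_sq_le (by rw [div_pow, mul_pow, hAs]; linarith))
    (by rw [Real.sq_sqrt hDp.le, hAs])
  linarith
end

section
/- Let α > 0, ζ > 0, q ≥ 0 and N > 0 be real numbers, and define τ_ε := α·ζ + q²/(2N) − √( (α·ζ + q²/(2N))² + α²·(q²·ζ/N − ζ²) ). Then the radicand is nonnegative, α·ζ − τ_ε ≥ 0, and τ_ε satisfies N·(α·ζ − τ_ε)² = q²·(α²·ζ + τ_ε). -/
/-- Equation (44): `τ_ε` is the attempt probability at which the asymptotic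
Q-function argument `√N (αζ − τ)/√(α²ζ + τ)` equals `q`: the radicand in its
definition is nonnegative, `αζ − τ_ε ≥ 0`, and `N(αζ − τ_ε)² = q²(α²ζ + τ_ε)`. -/
theorem tau_epsilon_identity
    (α ζ q N τε : ℝ) (hα : 0 < α) (hζ : 0 < ζ) (hq : 0 ≤ q) (hN : 0 < N)
    (hτε : τε = α * ζ + q ^ 2 / (2 * N) -
      Real.sqrt ((α * ζ + q ^ 2 / (2 * N)) ^ 2 +
        α ^ 2 * (q ^ 2 * ζ / N - ζ ^ 2))) :
    0 ≤ (α * ζ + q ^ 2 / (2 * N)) ^ 2 + α ^ 2 * (q ^ 2 * ζ / N - ζ ^ 2) ∧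
      0 ≤ α * ζ - τε ∧
      N * (α * ζ - τε) ^ 2 = q ^ 2 * (α ^ 2 * ζ + τε) := by
  obtain ⟨c, hc⟩ : ∃ c, c = q ^ 2 / (2 * N) := ⟨_, rfl⟩
  have hc0 : 0 ≤ c := by rw [hc]; positivity
  have hq2 : q ^ 2 = 2 * N * c := by rw [hc]; field_simp
  have hR : (α * ζ + q ^ 2 / (2 * N)) ^ 2 + α ^ 2 * (q ^ 2 * ζ / N - ζ ^ 2)
      = c ^ 2 + (2 * α * ζ * c + 2 * α ^ 2 * c * ζ) := by
    have h2 : q ^ 2 * ζ / N = 2 * c * ζ := by rw [hq2]; field_simp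
    rw [← hc, h2]; ring
  have hp : 0 ≤ 2 * α * ζ * c + 2 * α ^ 2 * c * ζ := by positivity
  rw [hR, ← hc] at hτε
  rw [hR, hq2]
  have hR0 : 0 ≤ c ^ 2 + (2 * α * ζ * c + 2 * α ^ 2 * c * ζ) := by positivity
  have hs := Real.sq_sqrt hR0
  have hle : c ≤ Real.sqrt (c ^ 2 + (2 * α * ζ * c + 2 * α ^ 2 * c * ζ)) :=
    Real.le_sqrt_of_sq_le (by linarith)
  refine ⟨hR0, by linarith, ?_⟩
  generalize Real.sqrt (c ^ 2 + (2 * α * ζ * c + 2 * α ^ 2 * c * ζ)) = s at *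
  subst hτε
  linear_combination N * hs
end
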